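/- Let Φ be a 2L×L complex matrix of rank L, written as a stacked pair Φ = (a; b) with a, b of size L×L, such that Φ*𝓛Φ = 0 (Φ is 𝓛-Lagrangian). Then both a and b are invertible and a·b⁻¹ is unitary. Consequently Φ = (U; 1)·b with the unitary U = a·b⁻¹, and the map sending the column space of an 𝓛-Lagrangian frame Φ = (a; b) to a·b⁻¹ is a bijection from the set of 𝓛-Lagrangian L-dimensional subspaces of ℂ^{2L} onto the unitary group U(L). -/

import Mathlib

open Matrix
open scoped ComplexOrder

/-- The fundamental form `𝓛 = diag(1, −1)`. -/
noncomputable def Lform (L : ℕ) : Matrix (Fin L ⊕ Fin L) (Fin L ⊕ Fin L) ℂ :=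
  fromBlocks 1 0 0 (-1)

theorem aux_form (L : ℕ) (a b : Matrix (Fin L) (Fin L) ℂ) :
    (fromRows a b)ᴴ * Lform L * fromRows a b = aᴴ * a - bᴴ * b := by
  rw [Matrix.mul_assoc, Lform, fromBlocks_mul_fromRows,
    conjTranspose_fromRows_eq_fromCols_conjTranspose, fromCols_mul_fromRows]
  simp [sub_eq_add_neg]

theorem aux_gram (L : ℕ) (a b : Matrix (Fin L) (Fin L) ℂ) :
    (fromRows a b)ᴴ * fromRows a b = aᴴ * a + bᴴ * b := by
  rw [conjTranspose_fromRows_eq_fromCols_conjTranspose, fromCols_mul_fromRows]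

theorem aux_unit (L : ℕ) (m : Matrix (Fin L) (Fin L) ℂ) (h : m.rank = L) : IsUnit m := by
  rw [← mulVec_surjective_iff_isUnit]
  have h1 : LinearMap.range m.mulVecLin = ⊤ := by
    apply Submodule.eq_top_of_finrank_eq
    rw [Matrix.rank] at h
    simp [h]
  exact LinearMap.range_eq_top.mp h1

theorem aux_main (L : ℕ) (a b : Matrix (Fin L) (Fin L) ℂ)
    (hr : (fromRows a b).rank = L) (hf : (fromRows a b)ᴴ * Lform L * fromRows a b = 0) :
    IsUnit a ∧ IsUnit b ∧ a * b⁻¹ ∈ Matrix.unitaryGroup (Fin L) ℂ ∧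
        fromRows a b = fromRows (a * b⁻¹) 1 * b := by
  rw [aux_form, sub_eq_zero] at hf
  rw [← rank_conjTranspose_mul_self, aux_gram] at hr
  have hu := aux_unit L _ hr
  have ha : IsUnit a := by
    rw [← hf, ← Matrix.add_mul, isUnit_iff_isUnit_det, det_mul] at hu
    rw [isUnit_iff_isUnit_det]
    exact isUnit_of_mul_isUnit_right hu
  have hb : IsUnit b := by
    rw [hf, ← Matrix.add_mul, isUnit_iff_isUnit_det, det_mul] at hu
    rw [isUnit_iff_isUnit_det]
    exact isUnit_of_mul_isUnit_right hu
  have hbd : IsUnit b.det := (isUnit_iff_isUnit_det b).mp hb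
  refine ⟨ha, hb, ?_, ?_⟩
  · rw [mem_unitaryGroup_iff', star_eq_conjTranspose, conjTranspose_mul]
    calc (b⁻¹)ᴴ * aᴴ * (a * b⁻¹) = (b⁻¹)ᴴ * (aᴴ * a) * b⁻¹ := by simp only [Matrix.mul_assoc]
      _ = (b * b⁻¹)ᴴ * (b * b⁻¹) := by
        rw [hf, conjTranspose_mul]; simp only [Matrix.mul_assoc]
      _ = 1 := by rw [mul_nonsing_inv b hbd]; simp
  · rw [fromRows_mul, Matrix.mul_assoc, nonsing_inv_mul b hbd, Matrix.mul_one, Matrix.one_mul]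

theorem aux_range (L : ℕ) (u b : Matrix (Fin L) (Fin L) ℂ) (hb : IsUnit b) :
    LinearMap.range (fromRows u (1 : Matrix (Fin L) (Fin L) ℂ) * b).mulVecLin = LinearMap.range (fromRows u (1 : Matrix (Fin L) (Fin L) ℂ)).mulVecLin := by
  rw [mulVecLin_mul, LinearMap.range_comp_of_range_eq_top]
  rw [LinearMap.range_eq_top]
  exact mulVec_surjective_iff_isUnit.mpr hb

theorem aux_inj (L : ℕ) (u v : Matrix (Fin L) (Fin L) ℂ)
    (h : LinearMap.range (fromRows u (1 : Matrix (Fin L) (Fin L) ℂ)).mulVecLin = LinearMap.range (fromRows v (1 : Matrix (Fin L) (Fin L) ℂ)).mulVecLin) :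
    u = v := by
  apply Matrix.ext_of_mulVec_single
  intro i
  have hx : (fromRows u (1 : Matrix (Fin L) (Fin L) ℂ)).mulVecLin (Pi.single i 1) ∈ LinearMap.range (fromRows v (1 : Matrix (Fin L) (Fin L) ℂ)).mulVecLin :=
    h ▸ LinearMap.mem_range_self _ _
  obtain ⟨y, hy⟩ := hx
  simp only [mulVecLin_apply, fromRows_mulVec, Matrix.one_mulVec] at hy
  obtain ⟨h1, h2⟩ := Sum.elim_eq_iff.1 hy
  rw [← h1, h2]

/-- For every `𝓛`-Lagrangian frame `Φ = (a; b)` of rank `L`, both `a` and `b`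
are invertible, `a·b⁻¹` is unitary and `Φ = (a·b⁻¹; 1)·b`; moreover the map sending the
column space of a Lagrangian frame to `a·b⁻¹` is well defined and injective (two Lagrangian
frames have the same column space iff they have the same value `a·b⁻¹`) and surjective onto
the unitary group `U(L)`. -/
theorem stmt_17 (L : ℕ) (hL : 1 ≤ L) :
    (∀ a b : Matrix (Fin L) (Fin L) ℂ,
      (fromRows a b).rank = L → (fromRows a b)ᴴ * Lform L * fromRows a b = 0 →
        IsUnit a ∧ IsUnit b ∧ a * b⁻¹ ∈ Matrix.unitaryGroup (Fin L) ℂ ∧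
        fromRows a b = fromRows (a * b⁻¹) 1 * b) ∧
    (∀ a b c d : Matrix (Fin L) (Fin L) ℂ,
      (fromRows a b).rank = L → (fromRows a b)ᴴ * Lform L * fromRows a b = 0 →
      (fromRows c d).rank = L → (fromRows c d)ᴴ * Lform L * fromRows c d = 0 →
      (LinearMap.range (fromRows a b).mulVecLin = LinearMap.range (fromRows c d).mulVecLin ↔
        a * b⁻¹ = c * d⁻¹)) ∧
    (∀ W ∈ Matrix.unitaryGroup (Fin L) ℂ, ∃ a b : Matrix (Fin L) (Fin L) ℂ,
      (fromRows a b).rank = L ∧ (fromRows a b)ᴴ * Lform L * fromRows a b = 0 ∧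
      a * b⁻¹ = W) := by
  refine ⟨aux_main L, ?_, ?_⟩
  · intro a b c d h1 h2 h3 h4
    obtain ⟨_, hb, _, e1⟩ := aux_main L a b h1 h2
    obtain ⟨_, hd, _, e2⟩ := aux_main L c d h3 h4
    rw [e1, e2, aux_range L _ b hb, aux_range L _ d hd]
    exact ⟨aux_inj L _ _, fun h => by rw [h]⟩
  · intro W hW
    rw [mem_unitaryGroup_iff', star_eq_conjTranspose] at hW
    refine ⟨W, 1, ?_, ?_, by simp⟩
    · rw [← rank_conjTranspose_mul_self, aux_gram, hW]
      have hu : IsUnit ((1 : Matrix (Fin L) (Fin L) ℂ) + 1ᴴ * 1) := by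
        rw [isUnit_iff_isUnit_det, conjTranspose_one, Matrix.mul_one, ← two_smul ℂ, det_smul]
        simp
      simpa using rank_of_isUnit _ hu
    · rw [aux_form, hW]; simp
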